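/- arXiv:1404.5147 — 2 statements merged into one kernel-verified Lean document; each statement's English description precedes it below -/
import Mathlib

section
/- Let A be a Noetherian integral domain that is integrally closed in its fraction field, and let C be an integral domain integrally closed in its own fraction field such that A ⊆ C ⊆ A^+, where A^+ is the absolute integral closure of A (equivalently, C contains A and every element of C is integral over A). Then C is completely integrally closed. -/
/-- An integral domain `A` is completely integrally closed if every element `x` of its fraction
field, for which there is a nonzero `a ∈ A` with `a * xⁿ ∈ A` for all `n ≥ 1`, lies in `A`. -/
def CompletelyIntegrallyClosed (A : Type*) [CommRing A] : Prop :=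
  ∀ x : FractionRing A,
    (∃ a : A, a ≠ 0 ∧ ∀ n : ℕ, 1 ≤ n →
      algebraMap A (FractionRing A) a * x ^ n ∈ (algebraMap A (FractionRing A)).range) →
    x ∈ (algebraMap A (FractionRing A)).range

/-!
Over a domain `R`, consider elements `x` of an extension field for which some nonzero `r : R` makes
every `r * xⁿ` integral over `R`; these are the elements almost integral over the integral closure
of `R`. If `q` is a monic equation of `r * xⁿ` over `R`, then the minimal polynomial of `x` over
`K = Frac R` divides `q(r Xⁿ)`, so the property passes to the conjugates of `x` with the same `r`.
Almost integral elements form a ring, so it passes further to the coefficients of the minimal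
polynomial. When `R` is completely integrally closed these coefficients lie in `R`, and `x` is
integral over `R`. Finally, an element almost integral over an integral extension `C` of `R` has
the property because every nonzero `c : C` divides a nonzero element of `R`.
-/

section AlmostIntegral

variable {R S T : Type*} [CommRing R] [CommRing S] [CommRing T] [Algebra R S] [Algebra R T]

theorem exists_isIntegral_smul_pow_of_isAlmostIntegral [Nontrivial R] {C : Type*} [CommRing C]
    [Algebra R C] [Algebra.IsIntegral R C] [Algebra C S] [IsScalarTower R C S] {x : S}
    (hx : IsAlmostIntegral C x) : ∃ r : R, r ≠ 0 ∧ ∀ n : ℕ, IsIntegral R (r • x ^ n) := by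
  obtain ⟨c, hc, hcx⟩ := hx
  obtain ⟨r, hr, d, hd⟩ :=
    (Algebra.IsIntegral.isIntegral (R := R) c).isAlgebraic.exists_nonzero_dvd hc
  refine ⟨r, hr, fun n ↦ ?_⟩
  obtain ⟨z, hz⟩ := hcx n
  have hdz : r • x ^ n = algebraMap C S (d * z) := by
    rw [← algebraMap_smul C r, hd, mul_comm c, mul_smul, ← hz, Algebra.smul_def, map_mul]
  exact hdz ▸ (Algebra.IsIntegral.isIntegral (R := R) (d * z)).algebraMap

theorem isAlmostIntegral_integralClosure_iff [IsDomain S] [FaithfulSMul R S] {x : S} :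
    IsAlmostIntegral (integralClosure R S) x ↔
      ∃ r : R, r ≠ 0 ∧ ∀ n : ℕ, IsIntegral R (r • x ^ n) := by
  have : IsDomain R := .of_faithfulSMul R S
  refine ⟨exists_isIntegral_smul_pow_of_isAlmostIntegral, fun ⟨r, hr, hrx⟩ ↦ ?_⟩
  refine ⟨algebraMap R (integralClosure R S) r, mem_nonZeroDivisors_of_ne_zero ?_, fun n ↦ ?_⟩
  · exact (FaithfulSMul.algebraMap_eq_zero_iff R _).not.mpr hr
  · exact ⟨⟨_, hrx n⟩, (algebraMap_smul (integralClosure R S) r (x ^ n)).symm⟩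

theorem isAlmostIntegral_of_map_integralClosure [IsDomain R] [IsIntegrallyClosedIn R S]
    (f : S →ₐ[R] T) (hf : Function.Injective f) {x : S}
    (hx : IsAlmostIntegral (integralClosure R T) (f x)) : IsAlmostIntegral R x := by
  obtain ⟨r, hr, hrx⟩ := exists_isIntegral_smul_pow_of_isAlmostIntegral (R := R) hx
  refine ⟨r, mem_nonZeroDivisors_of_ne_zero hr, fun n ↦ IsIntegrallyClosedIn.isIntegral_iff.mp ?_⟩
  rw [← isIntegral_algHom_iff f hf, map_smul, map_pow]
  exact hrx n

end AlmostIntegral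

section Minpoly

open Polynomial

variable {R K L M : Type*} [CommRing R] [Field K] [Algebra R K]

theorem isIntegral_aeval_of_aeval_minpoly_eq_zero [CommRing L] [CommRing M] [Algebra R L]
    [Algebra R M] [Algebra K L] [Algebra K M] [IsScalarTower R K L] [IsScalarTower R K M]
    {x : L} {y : M} (hy : aeval y (minpoly K x) = 0) {p : K[X]} (hp : IsIntegral R (aeval x p)) :
    IsIntegral R (aeval y p) := by
  obtain ⟨q, hq, hqx⟩ := hp
  rw [← aeval_def] at hqx
  have hdvd : minpoly K x ∣ (q.map (algebraMap R K)).comp p :=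
    minpoly.dvd K x (by rw [aeval_comp, aeval_map_algebraMap, hqx])
  have hqy := aeval_eq_zero_of_dvd_aeval_eq_zero hdvd hy
  rw [aeval_comp, aeval_map_algebraMap] at hqy
  exact ⟨q, hq, hqy⟩

theorem isAlmostIntegral_integralClosure_of_aeval_minpoly_eq_zero [FaithfulSMul R K]
    [CommRing L] [CommRing M] [IsDomain M] [Algebra R L] [Algebra R M] [Algebra K L] [Algebra K M]
    [IsScalarTower R K L] [IsScalarTower R K M] {x : L} {y : M} (hy : aeval y (minpoly K x) = 0)
    (hx : IsAlmostIntegral (integralClosure R L) x) :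
    IsAlmostIntegral (integralClosure R M) y := by
  have : IsDomain R := .of_faithfulSMul R K
  have : FaithfulSMul R M := .trans R K M
  obtain ⟨r, hr, hrx⟩ := exists_isIntegral_smul_pow_of_isAlmostIntegral (R := R) hx
  refine isAlmostIntegral_integralClosure_iff.mpr ⟨r, hr, fun n ↦ ?_⟩
  have hry := isIntegral_aeval_of_aeval_minpoly_eq_zero (R := R) hy (p := r • X ^ n)
  simp only [AlgHom.map_smul_of_tower, map_pow, aeval_X] at hry
  exact hry (hrx n)

theorem isIntegral_of_isAlmostIntegral_integralClosure [FaithfulSMul R K] [CommRing L]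
    [Algebra R L] [Algebra K L] [IsScalarTower R K L] {x : L}
    (hx : IsAlmostIntegral (integralClosure R L) x) : IsIntegral K x := by
  have : IsDomain R := .of_faithfulSMul R K
  obtain ⟨r, hr, hrx⟩ := exists_isIntegral_smul_pow_of_isAlmostIntegral (R := R) hx
  have hrK : algebraMap R K r ≠ 0 := (FaithfulSMul.algebraMap_eq_zero_iff R K).not.mpr hr
  have hrx1 : IsIntegral K (algebraMap R K r • x) := by
    simpa only [algebraMap_smul, pow_one] using (hrx 1).tower_top
  simpa only [inv_smul_smul₀ hrK] using hrx1.smul (algebraMap R K r)⁻¹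

theorem isAlmostIntegral_coeff_minpoly [IsIntegrallyClosedIn R K] [CommRing L] [Algebra R L]
    [Algebra K L] [IsScalarTower R K L] {x : L}
    (hx : IsAlmostIntegral (integralClosure R L) x) (i : ℕ) :
    IsAlmostIntegral R ((minpoly K x).coeff i) := by
  have : FaithfulSMul R K := (faithfulSMul_iff_algebraMap_injective R K).mpr
    (IsIntegralClosure.algebraMap_injective R R K)
  have : IsDomain R := .of_faithfulSMul R K
  let Ω := AlgebraicClosure K
  let D := completeIntegralClosure (integralClosure R Ω) Ω
  have hroots : ∀ y ∈ ((minpoly K x).map (algebraMap K Ω)).roots, y ∈ (algebraMap D Ω).range := by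
    intro y hy
    have hy0 := (mem_roots'.mp hy).2
    rw [IsRoot, eval_map_algebraMap] at hy0
    exact ⟨⟨y, isAlmostIntegral_integralClosure_of_aeval_minpoly_eq_zero hy0 hx⟩, rfl⟩
  have hmonic := minpoly.monic (isIntegral_of_isAlmostIntegral_integralClosure (K := K) hx)
  have hlifts := (IsAlgClosed.splits _).mem_lift_of_roots_mem_range
    (hmonic.map (algebraMap K Ω)) _ hroots
  obtain ⟨z, hz⟩ := (lifts_iff_coeff_lifts _).mp hlifts i
  rw [coeff_map] at hz
  exact isAlmostIntegral_of_map_integralClosure (IsScalarTower.toAlgHom R K Ω)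
    (algebraMap K Ω).injective (hz ▸ z.2)

theorem isIntegral_of_isIntegral_coeff_minpoly [CommRing L] [Nontrivial L] [Algebra R L]
    [Algebra K L] [IsScalarTower R K L] {x : L} (hx : IsIntegral K x)
    (h : ∀ i, IsIntegral R ((minpoly K x).coeff i)) : IsIntegral R x := by
  refine .of_aeval_monic_of_isIntegral_coeff ((minpoly.monic hx).map (algebraMap K L)) ?_ ?_ ?_
  · rw [(minpoly.monic hx).natDegree_map]
    exact (minpoly.natDegree_pos hx).ne'
  · rw [eval_map_algebraMap, minpoly.aeval]
    exact isIntegral_zero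
  · intro i
    rw [coeff_map]
    exact (h i).algebraMap

end Minpoly

section CompletelyIntegrallyClosed

variable {A : Type*} [CommRing A]

theorem completelyIntegrallyClosed_iff [IsDomain A] :
    CompletelyIntegrallyClosed A ↔ completeIntegralClosure A (FractionRing A) = ⊥ := by
  rw [eq_bot_iff]
  refine forall_congr' fun x ↦ imp_congr ⟨?_, ?_⟩ Iff.rfl
  · rintro ⟨a, ha, hax⟩
    refine ⟨a, mem_nonZeroDivisors_of_ne_zero ha, fun n ↦ ?_⟩
    rw [Algebra.smul_def]
    obtain rfl | hn := n.eq_zero_or_pos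
    · exact ⟨a, by rw [pow_zero, mul_one]⟩
    · exact hax n hn
  · rintro ⟨a, ha, hax⟩
    exact ⟨a, nonZeroDivisors.ne_zero ha, fun n _ ↦ Algebra.smul_def a (x ^ n) ▸ hax n⟩

theorem CompletelyIntegrallyClosed.isIntegrallyClosed [IsDomain A]
    (hA : CompletelyIntegrallyClosed A) : IsIntegrallyClosed A := by
  rw [← IsIntegrallyClosed.integralClosure_eq_bot_iff (FractionRing A), eq_bot_iff,
    ← completelyIntegrallyClosed_iff.mp hA]
  exact integralClosure_le_completeIntegralClosure

theorem completelyIntegrallyClosed_of_isNoetherianRing [IsDomain A] [IsNoetherianRing A]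
    [IsIntegrallyClosed A] : CompletelyIntegrallyClosed A := by
  rw [completelyIntegrallyClosed_iff, completeIntegralClosure_eq_integralClosure]
  exact IsIntegrallyClosedIn.integralClosure_eq_bot A (FractionRing A)

theorem CompletelyIntegrallyClosed.isIntegral_of_isAlmostIntegral
    (hA : CompletelyIntegrallyClosed A) {C L : Type*} [CommRing C] [Algebra A C]
    [Algebra.IsIntegral A C] [Field L] [Algebra A L] [FaithfulSMul A L] [Algebra C L]
    [IsScalarTower A C L] {x : L} (hx : IsAlmostIntegral C x) : IsIntegral A x := by
  have : IsDomain A := .of_faithfulSMul A L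
  let K := FractionRing A
  let _ : Algebra K L := FractionRing.liftAlgebra A L
  have : IsScalarTower A K L := FractionRing.isScalarTower_liftAlgebra A L
  have : IsIntegrallyClosed A := hA.isIntegrallyClosed
  have hxA : IsAlmostIntegral (integralClosure A L) x := isAlmostIntegral_integralClosure_iff.mpr
    (exists_isIntegral_smul_pow_of_isAlmostIntegral hx)
  refine isIntegral_of_isIntegral_coeff_minpoly (K := K)
    (isIntegral_of_isAlmostIntegral_integralClosure hxA) fun i ↦ ?_
  obtain ⟨a, ha⟩ := (completelyIntegrallyClosed_iff.mp hA).le (isAlmostIntegral_coeff_minpoly hxA i)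
  exact ha ▸ isIntegral_algebraMap

end CompletelyIntegrallyClosed

theorem completely_integrally_closed_of_integral_over_noetherian_normal_general
    {A : Type*} [CommRing A] (hA : CompletelyIntegrallyClosed A)
    {C : Type*} [CommRing C] [IsDomain C] [IsIntegrallyClosed C]
    [Algebra A C] (hinj : Function.Injective (algebraMap A C)) [Algebra.IsIntegral A C] :
    CompletelyIntegrallyClosed C := by
  have : FaithfulSMul A C := (faithfulSMul_iff_algebraMap_injective A C).mpr hinj
  rw [completelyIntegrallyClosed_iff, eq_bot_iff]
  intro x hx
  have hxA : IsIntegral A x := hA.isIntegral_of_isAlmostIntegral hx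
  exact IsIntegrallyClosed.isIntegral_iff.mp (hxA.tower_top (A := C))

/-- If `A` is a Noetherian integrally closed domain and `C` is an integrally
closed domain with `A ⊆ C ⊆ A⁺` (i.e. `C` contains `A` and every element of `C` is integral
over `A`), then `C` is completely integrally closed. -/
theorem completely_integrally_closed_of_integral_over_noetherian_normal
    (A : Type*) [CommRing A] [IsDomain A] [IsNoetherianRing A] [IsIntegrallyClosed A]
    (C : Type*) [CommRing C] [IsDomain C] [IsIntegrallyClosed C]
    [Algebra A C] (hinj : Function.Injective (algebraMap A C))
    [Algebra.IsIntegral A C] :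
    CompletelyIntegrallyClosed C :=
  completely_integrally_closed_of_integral_over_noetherian_normal_general
    completelyIntegrallyClosed_of_isNoetherianRing hinj
end

section
/- Let p be a prime and let A be a commutative ring such that p is a nonzerodivisor in A and the quotient A/pA is a perfect F_p-algebra. Then the p-adic completion A^∧ = lim_n A/p^n A is isomorphic to the ring of p-typical Witt vectors W(A/pA), via an isomorphism lifting the identity of A/pA; in particular there is a canonical ring homomorphism A → W(A/pA) whose composite with the projection W(A/pA) → A/pA is the quotient map, and this homomorphism is injective whenever A is p-adically separated (i.e., ⋂_n p^n A = 0). -/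
/-!
Let `S` be `p`-adically complete, with `p` regular in `S` and `S/pS` perfect. Modulo `p`, Fontaine's
map `θ : 𝕎 S♭ → S` is the projection `S♭ → S/pS`, which is bijective because `S/pS` is perfect.
Both sides are `p`-adically complete and `p` is regular in `S`, so `θ` is itself bijective and
`S ≃ 𝕎 S♭ ≃ 𝕎 (S/pS)`. The `p`-adic completion of `A` is such an `S`, with residue ring `A/pA`.
-/

open Ideal WittVector

theorem injective_of_ker_le_span_singleton {R S : Type*} [CommRing R] [CommRing S] (f : R →+* S)
    (a : R) [IsHausdorff (span {a}) R] (ha : f a ∈ nonZeroDivisors S)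
    (hf : RingHom.ker f ≤ span {a}) : Function.Injective f := by
  have pow_dvd_of_map_eq_zero (n : ℕ) : ∀ x, f x = 0 → a ^ n ∣ x := by
    induction n with
    | zero => simp
    | succ n ih =>
      intro x hx
      obtain ⟨y, rfl⟩ := mem_span_singleton.1 (hf hx)
      rw [map_mul, mul_left_mem_nonZeroDivisors_eq_zero_iff ha] at hx
      exact pow_succ' a n ▸ mul_dvd_mul_left a (ih y hx)
  refine (injective_iff_map_eq_zero f).2 fun x hx ↦ IsHausdorff.haus ‹_› x fun n ↦ ?_
  rw [SModEq.zero, smul_eq_mul, mul_top, span_singleton_pow, mem_span_singleton]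
  exact pow_dvd_of_map_eq_zero n x hx

theorem perfectRing_of_mulEquiv {M N : Type*} [CommMonoid M] [CommMonoid N] (p : ℕ)
    [PerfectRing M p] (e : M ≃* N) : PerfectRing N p where
  bijective_frobenius := by
    have pow_eq : (fun y : N ↦ y ^ p) = e ∘ (fun x : M ↦ x ^ p) ∘ e.symm := by
      ext; simp
    rw [pow_eq]
    exact e.bijective.comp (PerfectRing.bijective_frobenius.comp e.symm.bijective)

section AdicCompletion

variable {A : Type*} [CommRing A]

theorem algebraMap_adicCompletion_injective_iff {I : Ideal A} :
    Function.Injective (algebraMap A (AdicCompletion I A)) ↔ ⨅ n : ℕ, I ^ n = ⊥ := by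
  refine AdicCompletion.of_injective_iff.trans ?_
  simp [isHausdorff_iff, eq_bot_iff, SetLike.le_def, SModEq.zero, Submodule.mem_iInf]

theorem algebraMap_mem_nonZeroDivisors_adicCompletion {a : A} (ha : a ∈ nonZeroDivisors A) :
    algebraMap A (AdicCompletion (span {a}) A) a ∈
      nonZeroDivisors (AdicCompletion (span {a}) A) := by
  refine mem_nonZeroDivisors_iff_right.2 fun z hz ↦ ?_
  induction z using AdicCompletion.induction_on with | _ f
  refine AdicCompletion.ext_evalₐ fun n ↦ ?_
  have pow_succ_dvd_mul : a ^ (n + 1) ∣ f (n + 1) * a := by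
    rw [← mem_span_singleton, ← span_singleton_pow, ← Ideal.Quotient.eq_zero_iff_mem, map_mul]
    simpa using congrArg (AdicCompletion.evalₐ _ (n + 1)) hz
  have pow_dvd : a ^ n ∣ f (n + 1) := by
    obtain ⟨c, hc⟩ := pow_succ_dvd_mul
    refine ⟨c, (mul_cancel_right_mem_nonZeroDivisors ha).1 ?_⟩
    rw [hc, pow_succ, mul_right_comm]
  rwa [AdicCompletion.evalₐ_mk, map_zero, ← AdicCompletion.Ideal.mk_eq_mk _ n.le_succ,
    Ideal.Quotient.eq_zero_iff_mem, span_singleton_pow, mem_span_singleton]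

theorem map_algebraMap_span_natCast (B : Type*) [CommRing B] [Algebra A B] (n : ℕ) :
    (span {(n : A)}).map (algebraMap A B) = span {(n : B)} := by
  simp [map_span]

variable (A) in
theorem isAdicComplete_span_natCast_adicCompletion (n : ℕ) :
    IsAdicComplete (span {(n : AdicCompletion (span {(n : A)}) A)})
      (AdicCompletion (span {(n : A)}) A) := by
  rw [← map_algebraMap_span_natCast (A := A) (AdicCompletion (span {(n : A)}) A) n]
  exact AdicCompletion.isAdicComplete_self _ (Submodule.fg_span_singleton _)

variable (A) in
theorem ker_evalOneₐ_span_natCast (n : ℕ) :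
    RingHom.ker (AdicCompletion.evalOneₐ (span {(n : A)})).toRingHom =
      span {(n : AdicCompletion (span {(n : A)}) A)} := by
  rw [AdicCompletion.ker_evalOneₐ_eq_map _ (Submodule.fg_span_singleton _),
    map_algebraMap_span_natCast]

variable (A) in
/-- The identification of the residue rings modulo `n` of the `n`-adic completion of `A` and of `A`,
induced by the projection `AdicCompletion.evalOneₐ`. -/
noncomputable def modPAdicCompletionEquiv (n : ℕ) :
    ModP (AdicCompletion (span {(n : A)}) A) n ≃+* ModP A n :=
  (quotEquivOfEq (ker_evalOneₐ_span_natCast A n).symm).trans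
    (RingHom.quotientKerEquivOfSurjective (AdicCompletion.evalOneₐ_surjective _))

theorem modPAdicCompletionEquiv_mk (n : ℕ) (x : AdicCompletion (span {(n : A)}) A) :
    modPAdicCompletionEquiv A n (Ideal.Quotient.mk _ x) = AdicCompletion.evalOneₐ _ x :=
  rfl

variable (A) in
theorem not_isUnit_natCast_adicCompletion (n : ℕ) [Nontrivial (ModP A n)] :
    ¬IsUnit (n : AdicCompletion (span {(n : A)}) A) := by
  rw [← span_singleton_eq_top]
  exact Ideal.Quotient.nontrivial_iff.1 (modPAdicCompletionEquiv A n).toEquiv.nontrivial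

end AdicCompletion

section Witt

variable {p : ℕ} [Fact p.Prime]

theorem ghostComponent_zero_eq_coeff_zero {R : Type*} [CommRing R] (x : WittVector p R) :
    ghostComponent 0 x = x.coeff 0 := by
  simp [ghostComponent_apply]

variable (p) in
/-- Functoriality of Witt vectors for ring isomorphisms. -/
noncomputable def wittVectorCongr {R S : Type*} [CommRing R] [CommRing S]
    (e : R ≃+* S) : WittVector p R ≃+* WittVector p S :=
  .ofBijective (WittVector.map e.toRingHom)
    ⟨map_injective _ e.injective, map_surjective _ e.surjective⟩

variable {S : Type*} [CommRing S] [Fact ¬IsUnit (p : S)] [PerfectRing (ModP S p) p]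

variable (S p) in
/-- The projection from the tilt `S♭` onto `S/pS`, as an isomorphism when `S/pS` is perfect. -/
noncomputable def preTiltEquivModP : PreTilt S p ≃+* ModP S p :=
  (PerfectionMap.id p (ModP S p)).equiv.symm

theorem preTiltEquivModP_apply (x : PreTilt S p) : preTiltEquivModP p S x = PreTilt.coeff 0 x :=
  (PerfectionMap.id p (ModP S p)).comp_symm_equiv x

variable [IsAdicComplete (span {(p : S)}) S]

theorem mk_fontaineTheta_eq_preTiltEquivModP (x : WittVector p (PreTilt S p)) :
    Ideal.Quotient.mk _ (fontaineTheta S p x) = preTiltEquivModP p S (x.coeff 0) := by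
  rw [mk_fontaineTheta, preTiltEquivModP_apply]

theorem bijective_fontaineTheta (hp : (p : S) ∈ nonZeroDivisors S) :
    Function.Bijective (fontaineTheta S p) := by
  refine ⟨injective_of_ker_le_span_singleton _ (p : WittVector p (PreTilt S p))
    (by rwa [map_natCast]) fun x hx ↦ ?_,
    surjective_fontaineTheta (bijective_frobenius _ p).surjective⟩
  rw [mem_span_p_iff_coeff_zero_eq_zero, ← map_eq_zero_iff _ (preTiltEquivModP p S).injective,
    ← mk_fontaineTheta_eq_preTiltEquivModP, RingHom.mem_ker.1 hx, map_zero]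

/-- The identification of `S` with `𝕎 (S/pS)` when `S` is `p`-adically complete and `p`-torsion
free with `S/pS` perfect: the inverse of Fontaine's map followed by `𝕎 S♭ ≃ 𝕎 (S/pS)`. -/
noncomputable def equivWittVectorModP (hp : (p : S) ∈ nonZeroDivisors S) :
    S ≃+* WittVector p (ModP S p) :=
  (RingEquiv.ofBijective (fontaineTheta S p) (bijective_fontaineTheta hp)).symm.trans
    (wittVectorCongr p (preTiltEquivModP p S))

theorem coeff_zero_equivWittVectorModP (hp : (p : S) ∈ nonZeroDivisors S) (s : S) :
    (equivWittVectorModP hp s).coeff 0 = Ideal.Quotient.mk _ s := by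
  let θ := RingEquiv.ofBijective (fontaineTheta S p) (bijective_fontaineTheta hp)
  calc preTiltEquivModP p S ((θ.symm s).coeff 0)
    _ = Ideal.Quotient.mk _ (θ (θ.symm s)) := (mk_fontaineTheta_eq_preTiltEquivModP _).symm
    _ = Ideal.Quotient.mk _ s := by rw [θ.apply_symm_apply]

end Witt

theorem exists_adicCompletion_equiv_wittVector {p : ℕ} [Fact p.Prime] {A : Type*} [CommRing A]
    (hp : (p : A) ∈ nonZeroDivisors A) [Nontrivial (ModP A p)] [PerfectRing (ModP A p) p] :
    ∃ e : AdicCompletion (span {(p : A)}) A ≃+* WittVector p (ModP A p),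
      ∀ x, (e x).coeff 0 = AdicCompletion.evalOneₐ _ x := by
  let r := modPAdicCompletionEquiv A p
  have := isAdicComplete_span_natCast_adicCompletion A p
  have : Fact ¬IsUnit (p : AdicCompletion (span {(p : A)}) A) :=
    ⟨not_isUnit_natCast_adicCompletion A p⟩
  have : PerfectRing (ModP (AdicCompletion (span {(p : A)}) A) p) p :=
    perfectRing_of_mulEquiv p r.symm.toMulEquiv
  have hp' : (p : AdicCompletion (span {(p : A)}) A) ∈ nonZeroDivisors _ := by
    simpa using algebraMap_mem_nonZeroDivisors_adicCompletion hp
  refine ⟨(equivWittVectorModP hp').trans (wittVectorCongr p r), fun x ↦ ?_⟩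
  calc r ((equivWittVectorModP hp' x).coeff 0)
    _ = r (Ideal.Quotient.mk _ x) := by rw [coeff_zero_equivWittVectorModP]
    _ = AdicCompletion.evalOneₐ _ x := modPAdicCompletionEquiv_mk p x

/-- If `p` is a nonzerodivisor of `A` and `A/pA` is a perfect `𝔽_p`-algebra, then
the `p`-adic completion of `A` is isomorphic to `𝕎 (A/pA)` via an isomorphism lifting the
identity of `A/pA`; in particular there is a canonical ring homomorphism `A → 𝕎 (A/pA)` whose
composite with the projection `𝕎 (A/pA) → A/pA` is the quotient map, and it is injective
whenever `A` is `p`-adically separated. -/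
theorem adic_completion_iso_witt_vectors
    (p : ℕ) [Fact p.Prime] (A : Type*) [CommRing A]
    (hp : (p : A) ∈ nonZeroDivisors A)
    [CharP (A ⧸ Ideal.span {(p : A)}) p]
    [PerfectRing (A ⧸ Ideal.span {(p : A)}) p] :
    ∃ e : AdicCompletion (Ideal.span {(p : A)}) A ≃+*
        WittVector p (A ⧸ Ideal.span {(p : A)}),
      (∀ a : A,
        WittVector.ghostComponent 0
            (e (algebraMap A (AdicCompletion (Ideal.span {(p : A)}) A) a)) =
          Ideal.Quotient.mk (Ideal.span {(p : A)}) a) ∧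
      ((⨅ n : ℕ, Ideal.span {(p : A)} ^ n) = ⊥ →
        Function.Injective
          (fun a : A => e (algebraMap A (AdicCompletion (Ideal.span {(p : A)}) A) a))) := by
  have : Nontrivial (ModP A p) := CharP.nontrivial_of_char_ne_one (Fact.out : p.Prime).ne_one
  obtain ⟨e, he⟩ := exists_adicCompletion_equiv_wittVector hp
  refine ⟨e, fun a ↦ ?_, fun h ↦ e.injective.comp (algebraMap_adicCompletion_injective_iff.2 h)⟩
  rw [ghostComponent_zero_eq_coeff_zero, he]
  exact AdicCompletion.evalOneₐ_of _ a
end
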